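/- Let n ≥ 1 be an integer, let α ∈ (0,1), s ∈ (0,1), and p ≥ 1 satisfy n > s·p, and let Ω ⊂ ℝ^{n+1} be an open convex set. Set p*_s := np/(n − sp). Then there exists a constant C > 0, depending only on n, α, s, and p, such that for every μH[n]-measurable function u : ℝ^{n+1} → ℝ with ∫_{∂Ω} |u|^p dμH[n] < ∞ one has (∫_{∂Ω} |u(x)|^{p*_s} dx)^{1/p*_s} ≤ C · ( (1/2) ∫_{∂Ω} ∫_{∂Ω} |u(x) − u(y)|^p / |x − y|^{n + sp} dx dy + ∫_{∂Ω} H_α(x)^{sp/α} |u(x)|^p dx )^{1/p}, where all integrals are taken in [0, +∞]. -/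

import Mathlib

open MeasureTheory Set Filter Metric
open scoped ENNReal NNReal

/-- The truncated integral defining the fractional `α`-mean curvature of `Ω` at `x`:
`(α/2) ∫_{|y-x|>ε} (χ_{Ωᶜ}(y) - χ_Ω(y)) |y-x|^{-(n+1+α)} dy`. -/
noncomputable def fracMCIntegral (n : ℕ) (α : ℝ) (Ω : Set (EuclideanSpace ℝ (Fin (n+1))))
    (x : EuclideanSpace ℝ (Fin (n+1))) (ε : ℝ) : ℝ :=
  (α/2) * ∫ y in {y : EuclideanSpace ℝ (Fin (n+1)) | ε < dist y x},
      ((Ωᶜ.indicator (fun _ => (1:ℝ)) y) - (Ω.indicator (fun _ => (1:ℝ)) y))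
        * (dist y x) ^ (-((n:ℝ)+1+α)) ∂volume

/-- `h` is the fractional `α`-mean curvature of `Ω` at `x` (principal value limit). -/
def IsFracMeanCurv (n : ℕ) (α : ℝ) (Ω : Set (EuclideanSpace ℝ (Fin (n+1))))
    (x : EuclideanSpace ℝ (Fin (n+1))) (h : ℝ) : Prop :=
  Filter.Tendsto (fracMCIntegral n α Ω x) (nhdsWithin 0 (Set.Ioi 0)) (nhds h)

/-!
Let `x` be a boundary point of the convex set `Ω`. Since `x ∉ Ω`, the set `Ω` is disjoint from its
mirror image through `x`, and the kernel is symmetric about `x`; so the curvature integral at `x`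
is the integral of the kernel over the points that lie in neither set. Hence, at every scale `r`,
either `Ω` fills a fixed fraction of `ball x r`, and projecting along the normal of a supporting
hyperplane at `x` shows that the boundary has area at least `c₀ * r ^ n` in that ball; or the
excluded region is large and the curvature at `x` is at least a multiple of `r ^ (-α)`.

This dichotomy gives the Sobolev inequality. At `x`, choose `r` so that, by Chebyshev's inequality,
`{‖u‖ ≥ ‖u x‖ / 2}` has at most half of the measure `c₀ * r ^ n`. If the boundary is large in
`ball x r`, then half of it contributes `‖u x - u y‖ ≥ ‖u x‖ / 2` to the Gagliardo energy; otherwise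
`Hα x ^ (s * p / α)` is at least a multiple of `r ^ (-(s * p))`. Either way this controls
`r ^ (-(s * p)) * ‖u x‖ ^ p`, a multiple of `A ^ (-(s * p / n)) * ‖u x‖ ^ q` with `A = ∫ ‖u‖ ^ q`,
and integrating in `x` bounds `A ^ (1 - s * p / n)`. Truncating `u` ensures that `A` is finite.
-/

section Moments

variable {X F : Type*} [SeminormedAddCommGroup F]

/-- The norm of `u` truncated at height `M`. Truncating makes the `q`-th moment finite for every
`q ≥ p` when the `p`-th one is, and does not increase the Gagliardo density. -/
noncomputable def truncNorm (u : X → F) (M : ℝ≥0) (x : X) : ℝ := min ‖u x‖ M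

theorem truncNorm_nonneg (u : X → F) (M : ℝ≥0) (x : X) : 0 ≤ truncNorm u M x :=
  le_min (norm_nonneg _) M.2

theorem norm_truncNorm (u : X → F) (M : ℝ≥0) (x : X) : ‖truncNorm u M x‖ = truncNorm u M x :=
  Real.norm_of_nonneg (truncNorm_nonneg u M x)

theorem truncNorm_le_norm (u : X → F) (M : ℝ≥0) (x : X) : truncNorm u M x ≤ ‖u x‖ :=
  min_le_left _ _

theorem norm_truncNorm_sub_le (u : X → F) (M : ℝ≥0) (x y : X) :
    ‖truncNorm u M x - truncNorm u M y‖ ≤ ‖u x - u y‖ :=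
  calc |min ‖u x‖ M - min ‖u y‖ M|
      ≤ max |‖u x‖ - ‖u y‖| |(M : ℝ) - M| := abs_min_sub_min_le_max _ _ _ _
    _ = |‖u x‖ - ‖u y‖| := by simp
    _ ≤ ‖u x - u y‖ := abs_norm_sub_norm_le _ _

variable [MeasurableSpace X] {μ : Measure X} {p q : ℝ}

theorem aestronglyMeasurable_truncNorm {u : X → F} (hu : AEStronglyMeasurable u μ) (M : ℝ≥0) :
    AEStronglyMeasurable (truncNorm u M) μ :=
  hu.norm.inf aestronglyMeasurable_const

theorem lintegral_truncNorm_rpow_ne_top (hp : 0 ≤ p) (hpq : p ≤ q) {u : X → F}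
    (hu : ∫⁻ x, ENNReal.ofReal (‖u x‖ ^ p) ∂μ ≠ ⊤) (M : ℝ≥0) :
    ∫⁻ x, ENNReal.ofReal (‖truncNorm u M x‖ ^ q) ∂μ ≠ ⊤ := by
  have hpointwise (x : X) : ‖truncNorm u M x‖ ^ q ≤ (M : ℝ) ^ (q - p) * ‖u x‖ ^ p := by
    have htrunc := truncNorm_nonneg u M x
    rw [norm_truncNorm, ← sub_add_cancel q p, Real.rpow_add_of_nonneg htrunc (sub_nonneg.2 hpq) hp,
      add_sub_cancel_right]
    gcongr
    · exact min_le_right _ _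
    · exact truncNorm_le_norm u M x
  refine ne_top_of_le_ne_top (ENNReal.mul_ne_top
    (ENNReal.ofReal_ne_top (r := (M : ℝ) ^ (q - p))) hu) ?_
  rw [← lintegral_const_mul' _ _ ENNReal.ofReal_ne_top]
  refine lintegral_mono fun x ↦ ?_
  rw [← ENNReal.ofReal_mul (by positivity)]
  exact ENNReal.ofReal_le_ofReal (hpointwise x)

theorem iSup_lintegral_truncNorm_rpow (hq : 0 ≤ q) {u : X → F} (hu : AEStronglyMeasurable u μ) :
    ⨆ M : ℕ, ∫⁻ x, ENNReal.ofReal (‖truncNorm u M x‖ ^ q) ∂μ =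
      ∫⁻ x, ENNReal.ofReal (‖u x‖ ^ q) ∂μ := by
  have hmono (x : X) : Monotone fun M : ℕ ↦ ENNReal.ofReal (‖truncNorm u M x‖ ^ q) := by
    intro M N hMN
    simp only [norm_truncNorm]
    have htrunc := truncNorm_nonneg u M x
    gcongr
    exact min_le_min_left _ (by exact_mod_cast hMN)
  rw [← lintegral_iSup'
    (fun M ↦ ((aestronglyMeasurable_truncNorm hu M).norm.aemeasurable.pow_const q).ennreal_ofReal)
    (ae_of_all _ hmono)]
  refine lintegral_congr fun x ↦ le_antisymm (iSup_le fun M ↦ ?_) ?_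
  · rw [norm_truncNorm]
    have htrunc := truncNorm_nonneg u M x
    gcongr
    exact truncNorm_le_norm u M x
  · obtain ⟨M, hM⟩ := exists_nat_ge ‖u x‖
    refine le_iSup_of_le M (le_of_eq ?_)
    rw [norm_truncNorm, truncNorm, NNReal.coe_natCast, min_eq_left hM]

theorem measure_le_norm_le_lintegral_div {v : X → F} (hv : AEStronglyMeasurable v μ)
    (hq : 0 ≤ q) {a : ℝ} (ha : 0 < a) :
    μ {y | a ≤ ‖v y‖} ≤ (∫⁻ y, ENNReal.ofReal (‖v y‖ ^ q) ∂μ) / ENNReal.ofReal (a ^ q) :=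
  calc μ {y | a ≤ ‖v y‖}
      ≤ μ {y | ENNReal.ofReal (a ^ q) ≤ ENNReal.ofReal (‖v y‖ ^ q)} :=
        measure_mono fun y (hy : a ≤ ‖v y‖) ↦ ENNReal.ofReal_le_ofReal (by gcongr)
    _ ≤ _ := meas_ge_le_lintegral_div (hv.norm.aemeasurable.pow_const q).ennreal_ofReal
        (by simpa using Real.rpow_pos_of_pos ha q) ENNReal.ofReal_ne_top

end Moments

section Sobolev

variable {X F : Type*} [MetricSpace X] [MeasurableSpace X] [SeminormedAddCommGroup F]
  {μ : Measure X} {d t p q c₀ c : ℝ}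

/-- The inner integral `∫ ‖v x - v y‖ ^ p / |x - y| ^ k dμ(y)` of the Gagliardo seminorm; the
`W^{s,p}` seminorm on a `d`-dimensional set has `k = d + s * p`. The integrand vanishes at `y = x`
for `0 < p`, since it is formed in `ℝ` before passing to `ℝ≥0∞`. -/
noncomputable def gagliardoDensity (μ : Measure X) (p k : ℝ) (v : X → F) (x : X) : ℝ≥0∞ :=
  ∫⁻ y, ENNReal.ofReal (‖v x - v y‖ ^ p / dist x y ^ k) ∂μ

/-- At every scale `r` around `x`, either `μ` has at least the mass `c₀ * r ^ d` of a
`d`-dimensional measure, or the value `a` of the weight at `x` is at least `c * r ^ (-t)`. This is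
all that the fractional Sobolev inequality needs to know about the geometry of `μ`. -/
def MassOrWeight (μ : Measure X) (d t c₀ c : ℝ) (x : X) (a : ℝ≥0∞) : Prop :=
  ∀ r : ℝ, 0 < r →
    ENNReal.ofReal (c₀ * r ^ d) ≤ μ (ball x r) ∨ ENNReal.ofReal (c * r ^ (-t)) ≤ a

/-- The constant of the weighted fractional Sobolev inequality under `MassOrWeight`. -/
noncomputable def sobolevConst (d t p q c₀ c : ℝ) : ℝ :=
  (min c (c₀ / 2 ^ (p + 1)))⁻¹ * (2 ^ (q + 1) / c₀) ^ (t / d)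

theorem sobolevConst_pos (hc₀ : 0 < c₀) (hc : 0 < c) : 0 < sobolevConst d t p q c₀ c := by
  unfold sobolevConst
  positivity

theorem gagliardoDensity_mono {G : Type*} [SeminormedAddCommGroup G] {v : X → F} {u : X → G}
    {k : ℝ} {x : X} (hp : 0 ≤ p) (h : ∀ y, ‖v x - v y‖ ≤ ‖u x - u y‖) :
    gagliardoDensity μ p k v x ≤ gagliardoDensity μ p k u x := by
  unfold gagliardoDensity
  gcongr
  exact h _

variable [OpensMeasurableSpace X]

theorem mul_measure_ball_sub_le_gagliardoDensity {v : X → F} (hv : AEStronglyMeasurable v μ)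
    {k : ℝ} (hp : 0 ≤ p) (hk : 0 ≤ k) (x : X) (r : ℝ) :
    ENNReal.ofReal ((‖v x‖ / 2) ^ p / r ^ k) * (μ (ball x r) - μ {y | ‖v x‖ / 2 ≤ ‖v y‖}) ≤
      gagliardoDensity μ p k v x := by
  set S : Set X := {y | ‖v x‖ / 2 ≤ ‖v y‖}
  have hS : NullMeasurableSet S μ := nullMeasurableSet_le aemeasurable_const hv.norm.aemeasurable
  have hball_diff : NullMeasurableSet (ball x r \ S) μ :=
    measurableSet_ball.nullMeasurableSet.diff hS
  calc ENNReal.ofReal ((‖v x‖ / 2) ^ p / r ^ k) * (μ (ball x r) - μ S)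
      ≤ ENNReal.ofReal ((‖v x‖ / 2) ^ p / r ^ k) * μ (ball x r \ S) := by
        gcongr
        exact le_measure_sdiff
    _ = ∫⁻ y, (ball x r \ S).indicator (fun _ ↦ ENNReal.ofReal ((‖v x‖ / 2) ^ p / r ^ k)) y ∂μ :=
        (lintegral_indicator_const₀ hball_diff _).symm
    _ ≤ gagliardoDensity μ p k v x := lintegral_mono (indicator_le fun y hy ↦ ?_)
  have hvy : ‖v y‖ < ‖v x‖ / 2 := not_le.1 hy.2
  have hdist_pos : 0 < dist x y := dist_pos.2 fun hxy ↦ by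
    rw [← hxy] at hvy
    linarith [norm_nonneg (v x)]
  have hdist_le : dist x y ≤ r := (mem_ball'.1 hy.1).le
  have hdiff : ‖v x‖ / 2 ≤ ‖v x - v y‖ := by linarith [norm_sub_norm_le (v x) (v y)]
  gcongr

theorem ofReal_le_gagliardoDensity_add {v : X → F} (hv : AEStronglyMeasurable v μ) (hp : 0 ≤ p)
    (hdt : 0 ≤ d + t) (hc₀ : 0 ≤ c₀) (hc : 0 ≤ c) {x : X} {a : ℝ≥0∞} {r : ℝ} (hr : 0 < r)
    (hlevel : μ {y | ‖v x‖ / 2 ≤ ‖v y‖} ≤ ENNReal.ofReal (c₀ * r ^ d / 2))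
    (halt : ENNReal.ofReal (c₀ * r ^ d) ≤ μ (ball x r) ∨ ENNReal.ofReal (c * r ^ (-t)) ≤ a) :
    ENNReal.ofReal (min c (c₀ / 2 ^ (p + 1)) * (r ^ (-t) * ‖v x‖ ^ p)) ≤
      gagliardoDensity μ p (d + t) v x + a * ENNReal.ofReal (‖v x‖ ^ p) := by
  rcases halt with hmass | hweight
  · refine le_trans ?_ le_self_add
    calc ENNReal.ofReal (min c (c₀ / 2 ^ (p + 1)) * (r ^ (-t) * ‖v x‖ ^ p))
        ≤ ENNReal.ofReal (c₀ / 2 ^ (p + 1) * (r ^ (-t) * ‖v x‖ ^ p)) := by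
          gcongr
          exact min_le_right _ _
      _ = ENNReal.ofReal ((‖v x‖ / 2) ^ p / r ^ (d + t) * (c₀ * r ^ d - c₀ * r ^ d / 2)) := by
          rw [Real.div_rpow (norm_nonneg _) zero_le_two, Real.rpow_add hr, Real.rpow_neg hr.le,
            Real.rpow_add_one two_ne_zero]
          congr 1
          field_simp
          ring
      _ = ENNReal.ofReal ((‖v x‖ / 2) ^ p / r ^ (d + t)) *
            (ENNReal.ofReal (c₀ * r ^ d) - ENNReal.ofReal (c₀ * r ^ d / 2)) := by
          rw [ENNReal.ofReal_mul (by positivity), ENNReal.ofReal_sub _ (by positivity)]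
      _ ≤ ENNReal.ofReal ((‖v x‖ / 2) ^ p / r ^ (d + t)) *
            (μ (ball x r) - μ {y | ‖v x‖ / 2 ≤ ‖v y‖}) := by gcongr
      _ ≤ gagliardoDensity μ p (d + t) v x :=
          mul_measure_ball_sub_le_gagliardoDensity hv hp hdt x r
  · refine le_trans ?_ le_add_self
    calc ENNReal.ofReal (min c (c₀ / 2 ^ (p + 1)) * (r ^ (-t) * ‖v x‖ ^ p))
        ≤ ENNReal.ofReal (c * (r ^ (-t) * ‖v x‖ ^ p)) := by
          gcongr
          exact min_le_left _ _
      _ = ENNReal.ofReal (c * r ^ (-t)) * ENNReal.ofReal (‖v x‖ ^ p) := by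
          rw [← mul_assoc, ENNReal.ofReal_mul (by positivity)]
      _ ≤ a * ENNReal.ofReal (‖v x‖ ^ p) := by gcongr

/-- With `A` the `q`-th moment of `v`, Chebyshev's inequality bounds the mass of `{‖v‖ ≥ m / 2}` by
`A / (m / 2) ^ q`; at the scale `r` this is half of the mass `c₀ * r ^ d`. -/
theorem exists_balanced_scale (hd : d ≠ 0) (hpq : q * (1 - t / d) = p) (hc₀ : 0 < c₀) {A m : ℝ}
    (hA : 0 < A) (hm : 0 < m) :
    ∃ r : ℝ, 0 < r ∧ A / (m / 2) ^ q = c₀ * r ^ d / 2 ∧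
      r ^ (-t) * m ^ p = (2 ^ (q + 1) / c₀) ^ (-(t / d)) * (A ^ (-(t / d)) * m ^ q) := by
  have hbase : 0 < 2 ^ (q + 1) / c₀ * (A * m ^ (-q)) := by positivity
  refine ⟨(2 ^ (q + 1) / c₀ * (A * m ^ (-q))) ^ d⁻¹, by positivity, ?_, ?_⟩
  · rw [Real.rpow_inv_rpow hbase.le hd, Real.div_rpow hm.le zero_le_two, Real.rpow_neg hm.le,
      Real.rpow_add_one two_ne_zero]
    field_simp
  · have hexp : d⁻¹ * -t = -(t / d) := by ring
    have hm_exp : -q * -(t / d) + p = q := by linarith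
    rw [← Real.rpow_mul hbase.le, hexp, Real.mul_rpow (by positivity) (by positivity),
      Real.mul_rpow hA.le (by positivity), ← Real.rpow_mul hm.le, mul_assoc, mul_assoc,
      ← Real.rpow_add hm, hm_exp]

theorem MassOrWeight.ofReal_rpow_le {x : X} {a : ℝ≥0∞} (h : MassOrWeight μ d t c₀ c x a)
    (ht : 0 < t) (htd : t < d) (hq : 0 < q) (hpq : q * (1 - t / d) = p) (hc₀ : 0 < c₀) (hc : 0 < c)
    {v : X → F} (hv : AEStronglyMeasurable v μ) {A : ℝ} (hA0 : 0 < A)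
    (hA : ∫⁻ y, ENNReal.ofReal (‖v y‖ ^ q) ∂μ = ENNReal.ofReal A) :
    ENNReal.ofReal (A ^ (-(t / d)) * ‖v x‖ ^ q) ≤
      ENNReal.ofReal (sobolevConst d t p q c₀ c) *
        (gagliardoDensity μ p (d + t) v x + a * ENNReal.ofReal (‖v x‖ ^ p)) := by
  rcases (norm_nonneg (v x)).eq_or_lt with hvx | hvx
  · simp [← hvx, Real.zero_rpow hq.ne']
  have hd : 0 < d := ht.trans htd
  have hp : 0 < p := hpq ▸ mul_pos hq (sub_pos.2 ((div_lt_one hd).2 htd))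
  obtain ⟨r, hr, hmass, hscale⟩ := exists_balanced_scale hd.ne' hpq hc₀ hA0 hvx
  have hlevel : μ {y | ‖v x‖ / 2 ≤ ‖v y‖} ≤ ENNReal.ofReal (c₀ * r ^ d / 2) := by
    rw [← hmass, ENNReal.ofReal_div_of_pos (by positivity), ← hA]
    exact measure_le_norm_le_lintegral_div hv hq.le (by positivity)
  have hconst : A ^ (-(t / d)) * ‖v x‖ ^ q =
      sobolevConst d t p q c₀ c * (min c (c₀ / 2 ^ (p + 1)) * (r ^ (-t) * ‖v x‖ ^ p)) := by
    have hmin : min c (c₀ / 2 ^ (p + 1)) ≠ 0 := by positivity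
    have hbase : (0 : ℝ) < 2 ^ (q + 1) / c₀ := by positivity
    have hinv : (2 ^ (q + 1) / c₀) ^ (t / d) * (2 ^ (q + 1) / c₀) ^ (-(t / d)) = 1 := by
      rw [← Real.rpow_add hbase, add_neg_cancel, Real.rpow_zero]
    rw [hscale, sobolevConst, mul_assoc, ← mul_assoc _ (min _ _), mul_comm _ (min _ _),
      mul_assoc, ← mul_assoc, inv_mul_cancel₀ hmin, one_mul, ← mul_assoc, hinv, one_mul]
  rw [hconst, ENNReal.ofReal_mul (sobolevConst_pos hc₀ hc).le]
  gcongr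
  exact ofReal_le_gagliardoDensity_add hv hp.le (by positivity) hc₀.le hc.le hr hlevel (h r hr)

theorem lintegral_rpow_le_of_ne_top (ht : 0 < t) (htd : t < d) (hq : 0 < q)
    (hpq : q * (1 - t / d) = p) (hc₀ : 0 < c₀) (hc : 0 < c) {w : X → ℝ≥0∞}
    (hw : AEMeasurable w μ) (hx : ∀ᵐ x ∂μ, MassOrWeight μ d t c₀ c x (w x))
    {v : X → F} (hv : AEStronglyMeasurable v μ)
    (hvq : ∫⁻ y, ENNReal.ofReal (‖v y‖ ^ q) ∂μ ≠ ⊤) :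
    (∫⁻ y, ENNReal.ofReal (‖v y‖ ^ q) ∂μ) ^ (1 - t / d) ≤
      ENNReal.ofReal (sobolevConst d t p q c₀ c) *
        (∫⁻ x, gagliardoDensity μ p (d + t) v x ∂μ
          + ∫⁻ x, w x * ENNReal.ofReal (‖v x‖ ^ p) ∂μ) := by
  have htd' : 0 < 1 - t / d := sub_pos.2 ((div_lt_one (ht.trans htd)).2 htd)
  rcases eq_or_ne (∫⁻ y, ENNReal.ofReal (‖v y‖ ^ q) ∂μ) 0 with hzero | hne
  · rw [hzero, ENNReal.zero_rpow_of_pos htd']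
    exact zero_le
  obtain ⟨A, hA0, hA⟩ : ∃ A : ℝ, 0 < A ∧ ∫⁻ y, ENNReal.ofReal (‖v y‖ ^ q) ∂μ = ENNReal.ofReal A :=
    ⟨_, ENNReal.toReal_pos hne hvq, (ENNReal.ofReal_toReal hvq).symm⟩
  have hwv : AEMeasurable (fun x ↦ w x * ENNReal.ofReal (‖v x‖ ^ p)) μ :=
    hw.mul (hv.norm.aemeasurable.pow_const p).ennreal_ofReal
  calc (∫⁻ y, ENNReal.ofReal (‖v y‖ ^ q) ∂μ) ^ (1 - t / d)
      = ENNReal.ofReal (A ^ (-(t / d))) * ∫⁻ x, ENNReal.ofReal (‖v x‖ ^ q) ∂μ := by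
        rw [hA, ENNReal.ofReal_rpow_of_pos hA0, ← ENNReal.ofReal_mul (by positivity),
          ← Real.rpow_add_one hA0.ne', neg_add_eq_sub]
    _ = ∫⁻ x, ENNReal.ofReal (A ^ (-(t / d)) * ‖v x‖ ^ q) ∂μ := by
        simp_rw [ENNReal.ofReal_mul (Real.rpow_nonneg hA0.le (-(t / d)))]
        exact (lintegral_const_mul' _ _ ENNReal.ofReal_ne_top).symm
    _ ≤ ∫⁻ x, ENNReal.ofReal (sobolevConst d t p q c₀ c) *
          (gagliardoDensity μ p (d + t) v x + w x * ENNReal.ofReal (‖v x‖ ^ p)) ∂μ :=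
        lintegral_mono_ae (hx.mono fun x hx ↦ hx.ofReal_rpow_le ht htd hq hpq hc₀ hc hv hA0 hA)
    _ = _ := by rw [lintegral_const_mul' _ _ ENNReal.ofReal_ne_top, lintegral_add_right' _ hwv]

theorem lintegral_rpow_le_of_massOrWeight (ht : 0 < t) (htd : t < d) (hq : 0 < q)
    (hpq : q * (1 - t / d) = p) (hc₀ : 0 < c₀) (hc : 0 < c) {w : X → ℝ≥0∞}
    (hw : AEMeasurable w μ) (hx : ∀ᵐ x ∂μ, MassOrWeight μ d t c₀ c x (w x))
    {u : X → F} (hu : AEStronglyMeasurable u μ) (hup : ∫⁻ x, ENNReal.ofReal (‖u x‖ ^ p) ∂μ ≠ ⊤) :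
    (∫⁻ x, ENNReal.ofReal (‖u x‖ ^ q) ∂μ) ^ (1 - t / d) ≤
      ENNReal.ofReal (sobolevConst d t p q c₀ c) *
        (∫⁻ x, gagliardoDensity μ p (d + t) u x ∂μ
          + ∫⁻ x, w x * ENNReal.ofReal (‖u x‖ ^ p) ∂μ) := by
  have htd' : 0 < 1 - t / d := sub_pos.2 ((div_lt_one (ht.trans htd)).2 htd)
  have hp : 0 < p := hpq ▸ mul_pos hq htd'
  have hp_le_q : p ≤ q := hpq ▸ mul_le_of_le_one_right hq.le
    (sub_le_self 1 (div_nonneg ht.le (ht.trans htd).le))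
  rw [← ENNReal.le_rpow_inv_iff htd', ← iSup_lintegral_truncNorm_rpow hq.le hu]
  refine iSup_le fun M ↦ (ENNReal.le_rpow_inv_iff htd').2 ?_
  refine (lintegral_rpow_le_of_ne_top ht htd hq hpq hc₀ hc hw hx
    (aestronglyMeasurable_truncNorm hu M)
    (lintegral_truncNorm_rpow_ne_top hp.le hp_le_q hup M)).trans ?_
  gcongr with x x
  · exact gagliardoDensity_mono hp.le (norm_truncNorm_sub_le u M x)
  · exact (norm_truncNorm u M x).trans_le (truncNorm_le_norm u M x)

end Sobolev

section Projection

theorem exists_mem_segment_frontier {E : Type*} [AddCommGroup E] [Module ℝ E]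
    [TopologicalSpace E] [ContinuousAdd E] [ContinuousSMul ℝ E] {Ω : Set E} {y z : E}
    (hy : y ∈ Ω) (hz : z ∉ Ω) : ∃ w ∈ segment ℝ y z, w ∈ frontier Ω := by
  by_contra! h
  have hcover : segment ℝ y z ⊆ interior Ω ∪ (closure Ω)ᶜ := fun w hw ↦ by
    by_contra! hw'
    simp only [mem_union, mem_compl_iff, not_or, not_not] at hw'
    exact h w hw ⟨hw'.2, hw'.1⟩
  have hy' : y ∈ interior Ω :=
    (hcover (left_mem_segment ℝ y z)).resolve_right fun hyc ↦ hyc (subset_closure hy)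
  have hz' : z ∈ (closure Ω)ᶜ :=
    (hcover (right_mem_segment ℝ y z)).resolve_left fun hzi ↦ hz (interior_subset hzi)
  obtain ⟨w, -, hwi, hwc⟩ := (convex_segment y z).isPreconnected (interior Ω) (closure Ω)ᶜ
    isOpen_interior isClosed_closure.isOpen_compl hcover ⟨y, left_mem_segment ℝ y z, hy'⟩
    ⟨z, right_mem_segment ℝ y z, hz'⟩
  exact hwc (subset_closure (interior_subset hwi))

variable {E : Type*} [NormedAddCommGroup E] [InnerProductSpace ℝ E]

theorem exists_unit_forall_inner_lt [CompleteSpace E] {Ω : Set E} (hΩ : IsOpen Ω)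
    (hconv : Convex ℝ Ω) (hne : Ω.Nonempty) {x : E} (hx : x ∉ Ω) :
    ∃ e : E, ‖e‖ = 1 ∧ ∀ y ∈ Ω, inner ℝ e y < inner ℝ e x := by
  obtain ⟨f, hf⟩ := geometric_hahn_banach_open_point hconv hΩ hx
  obtain ⟨ν, rfl⟩ := (InnerProductSpace.toDual ℝ E).surjective f
  simp only [InnerProductSpace.toDual_apply_apply] at hf
  have hν : 0 < ‖ν‖ := norm_pos_iff.2 fun hν ↦ by
    obtain ⟨y, hy⟩ := hne
    simpa [hν] using hf y hy
  refine ⟨(‖ν‖⁻¹ : ℝ) • ν, norm_smul_inv_norm (norm_pos_iff.1 hν), fun y hy ↦ ?_⟩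
  simp only [real_inner_smul_left]
  have hfy := hf y hy
  gcongr

theorem dist_add_inner_smul_le {e : E} (he : ‖e‖ = 1) (x y : E) :
    dist (y + inner ℝ e (x - y) • e) x ≤ dist y x := by
  have hproj : y + inner ℝ e (x - y) • e - x = -((x - y) - inner ℝ e (x - y) • e) := by abel
  have hsq : ‖(x - y) - inner ℝ e (x - y) • e‖ ^ 2 = ‖x - y‖ ^ 2 - inner ℝ e (x - y) ^ 2 := by
    rw [norm_sub_sq_real, real_inner_smul_right, real_inner_comm, norm_smul, he, mul_one,
      Real.norm_eq_abs, sq_abs]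
    ring
  rw [dist_eq_norm, hproj, norm_neg, dist_comm, dist_eq_norm]
  exact le_of_sq_le_sq (by nlinarith) (norm_nonneg _)

variable [FiniteDimensional ℝ E] {n : ℕ}

theorem exists_orthonormalBasis_zero_eq (hE : Module.finrank ℝ E = n + 1) {e : E} (he : ‖e‖ = 1) :
    ∃ b : OrthonormalBasis (Fin (n + 1)) ℝ E, b 0 = e := by
  have hsingle : Orthonormal ℝ (({0} : Set (Fin (n + 1))).domRestrict fun _ ↦ e) := by
    rw [orthonormal_iff_ite]
    rintro ⟨i, rfl⟩ ⟨j, rfl⟩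
    simp [he]
  obtain ⟨b, hb⟩ := hsingle.exists_orthonormalBasis_extension_of_card_eq (by simpa using hE)
  exact ⟨b, hb 0 rfl⟩

variable [MeasurableSpace E] [BorelSpace E]

/-- The target carries the sup norm, for which the `n`-dimensional Hausdorff measure of
`Fin n → ℝ` is exactly the Lebesgue measure. -/
theorem exists_measurableEquiv_inner_prod (hE : Module.finrank ℝ E = n + 1) {e : E}
    (he : ‖e‖ = 1) :
    ∃ T : E ≃ᵐ ℝ × (Fin n → ℝ), MeasurePreserving T ∧ (∀ y, (T y).1 = inner ℝ e y) ∧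
      LipschitzWith 1 (fun y ↦ (T y).2) ∧ ∀ (y : E) (θ : ℝ), (T (y + θ • e)).2 = (T y).2 := by
  obtain ⟨b, rfl⟩ := exists_orthonormalBasis_zero_eq hE he
  let T : E ≃ᵐ ℝ × (Fin n → ℝ) :=
    (b.measurableEquiv.trans (MeasurableEquiv.toLp 2 (Fin (n + 1) → ℝ)).symm).trans
      (MeasurableEquiv.piFinSuccAbove (fun _ ↦ ℝ) 0)
  have hT_snd (y : E) (i : Fin n) : (T y).2 i = inner ℝ (b i.succ) y := by
    simp [T, OrthonormalBasis.measurableEquiv, MeasurableEquiv.piFinSuccAbove,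
      b.repr_apply_apply, Fin.tail]
  refine ⟨T, (volume_preserving_piFinSuccAbove (fun _ : Fin (n + 1) ↦ ℝ) 0).comp
    ((PiLp.volume_preserving_ofLp (Fin (n + 1))).comp b.measurePreserving_repr),
    fun y ↦ ?_, LipschitzWith.of_dist_le_mul fun y z ↦ ?_, fun y θ ↦ funext fun i ↦ ?_⟩
  · simp [T, OrthonormalBasis.measurableEquiv, MeasurableEquiv.piFinSuccAbove, b.repr_apply_apply]
  · rw [NNReal.coe_one, one_mul, dist_pi_le_iff dist_nonneg]
    intro i
    rw [hT_snd, hT_snd, Real.dist_eq, ← inner_sub_right, dist_eq_norm]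
    simpa using abs_real_inner_le_norm (b i.succ) (y - z)
  · rw [hT_snd, hT_snd, inner_add_right, real_inner_smul_right,
      b.orthonormal.2 (Fin.succ_ne_zero i), mul_zero, add_zero]

theorem volume_le_mul_hausdorffMeasure_of_lines (hE : Module.finrank ℝ E = n + 1) {e : E}
    (he : ‖e‖ = 1) {S A : Set E} {l m : ℝ} (hS : ∀ y ∈ S, inner ℝ e y ∈ Ioo l m)
    (hSA : ∀ y ∈ S, ∃ θ : ℝ, y + θ • e ∈ A) :
    volume S ≤ ENNReal.ofReal (m - l) * μH[(n : ℝ)] A := by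
  obtain ⟨T, hT, hT_fst, hT_snd, hT_line⟩ := exists_measurableEquiv_inner_prod hE he
  set P : Set (Fin n → ℝ) := (fun y ↦ (T y).2) '' A
  have hsub : S ⊆ T ⁻¹' (Ioo l m ×ˢ P) := fun y hy ↦ by
    obtain ⟨θ, hθ⟩ := hSA y hy
    exact ⟨by simpa only [hT_fst] using hS y hy, _, hθ, hT_line y θ⟩
  have hP : volume P ≤ μH[(n : ℝ)] A := by
    rw [← hausdorffMeasure_pi_real, Fintype.card_fin]
    simpa using hT_snd.hausdorffMeasure_image_le n.cast_nonneg A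
  calc volume S ≤ volume (T ⁻¹' (Ioo l m ×ˢ P)) := measure_mono hsub
    _ = ENNReal.ofReal (m - l) * volume P := by
        rw [hT.measure_preimage_equiv, Measure.volume_eq_prod, Measure.prod_prod, Real.volume_Ioo]
    _ ≤ ENNReal.ofReal (m - l) * μH[(n : ℝ)] A := by gcongr

/-- Project along the normal of a supporting hyperplane at `x`: each line through a point of
`Ω ∩ ball x r` reaches the hyperplane, hence leaves `Ω`, without leaving the ball. -/
theorem volume_inter_ball_le_hausdorffMeasure_frontier (hE : Module.finrank ℝ E = n + 1)
    {Ω : Set E} (hΩ : IsOpen Ω) (hconv : Convex ℝ Ω) {x : E} (hx : x ∉ Ω) (r : ℝ) :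
    volume (Ω ∩ ball x r) ≤ ENNReal.ofReal (2 * r) * μH[(n : ℝ)] (frontier Ω ∩ ball x r) := by
  rcases Ω.eq_empty_or_nonempty with rfl | hne
  · simp
  obtain ⟨e, he, heΩ⟩ := exists_unit_forall_inner_lt hΩ hconv hne hx
  have hslab : ∀ y ∈ Ω ∩ ball x r, inner ℝ e y ∈ Ioo (inner ℝ e x - r) (inner ℝ e x + r) := by
    rintro y ⟨-, hyr⟩
    have hinner : |inner ℝ e (y - x)| < r :=
      (abs_real_inner_le_norm e (y - x)).trans_lt (by rwa [he, one_mul, ← dist_eq_norm])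
    rw [inner_sub_right, abs_lt] at hinner
    constructor <;> linarith
  have hline : ∀ y ∈ Ω ∩ ball x r, ∃ θ : ℝ, y + θ • e ∈ frontier Ω ∩ ball x r := by
    rintro y ⟨hyΩ, hyr⟩
    set z := y + inner ℝ e (x - y) • e with hz
    have hzΩ : z ∉ Ω := fun h ↦ (heΩ z h).ne (by
      rw [hz, inner_add_right, real_inner_smul_right, real_inner_self_eq_norm_sq, he,
        inner_sub_right]
      ring)
    have hzr : z ∈ ball x r := (dist_add_inner_smul_le he x y).trans_lt hyr
    obtain ⟨w, hw, hwΩ⟩ := exists_mem_segment_frontier hyΩ hzΩ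
    obtain ⟨θ, -, rfl⟩ := (segment_eq_image' ℝ y z).subset hw
    refine ⟨θ * inner ℝ e (x - y), ?_⟩
    rw [mul_smul, ← add_sub_cancel_left y (inner ℝ e (x - y) • e)]
    exact ⟨hwΩ, (convex_ball x r).segment_subset hyr hzr hw⟩
  have hwidth : inner ℝ e x + r - (inner ℝ e x - r) = 2 * r := by ring
  exact hwidth ▸ volume_le_mul_hausdorffMeasure_of_lines hE he hslab hline

end Projection

section SymmetricExterior

open AffineIsometryEquiv (pointReflection)

variable {E : Type*} [NormedAddCommGroup E] [NormedSpace ℝ E] {Ω : Set E} {x : E}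

/-- The points that lie neither in `Ω` nor in the mirror image of `Ω` through `x`. For convex `Ω`
and `x ∉ Ω` this is what survives of the fractional mean curvature integral at `x` once the
contribution of `Ω` has been cancelled against that of its mirror image. -/
def symmetricExterior (Ω : Set E) (x : E) : Set E :=
  Ωᶜ ∩ pointReflection ℝ x ⁻¹' Ωᶜ

theorem disjoint_preimage_pointReflection (hconv : Convex ℝ Ω) (hx : x ∉ Ω) :
    Disjoint Ω (pointReflection ℝ x ⁻¹' Ω) :=
  disjoint_left.2 fun y hy hy' ↦ hx <| by
    rw [← midpoint_pointReflection_right (R := ℝ) x y]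
    exact hconv.midpoint_mem hy hy'

theorem symmetricExterior_union_preimage (hconv : Convex ℝ Ω) (hx : x ∉ Ω) :
    symmetricExterior Ω x ∪ pointReflection ℝ x ⁻¹' Ω = Ωᶜ := by
  rw [symmetricExterior, preimage_compl, ← sdiff_eq, sdiff_union_of_subset]
  exact (disjoint_preimage_pointReflection hconv hx).subset_compl_left

variable [MeasurableSpace E] [BorelSpace E]

theorem measurableEmbedding_pointReflection (x : E) :
    MeasurableEmbedding (pointReflection ℝ x) :=
  (pointReflection ℝ x).toHomeomorph.measurableEmbedding

theorem measurableSet_symmetricExterior (hΩ : MeasurableSet Ω) (x : E) :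
    MeasurableSet (symmetricExterior Ω x) :=
  hΩ.compl.inter ((measurableEmbedding_pointReflection x).measurable hΩ.compl)

theorem integral_compl_indicator_sub_indicator_mul {μ : Measure E} (hΩ : MeasurableSet Ω)
    (hconv : Convex ℝ Ω) (hx : x ∉ Ω) (hμ : MeasurePreserving (pointReflection ℝ x) μ μ)
    {K : E → ℝ} (hK : Integrable K μ) (hKx : ∀ y, K (pointReflection ℝ x y) = K y) :
    ∫ y, (Ωᶜ.indicator (fun _ ↦ (1 : ℝ)) y - Ω.indicator (fun _ ↦ (1 : ℝ)) y) * K y ∂μ =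
      ∫ y in symmetricExterior Ω x, K y ∂μ := by
  have hemb := measurableEmbedding_pointReflection x
  have hmirror : ∫ y in pointReflection ℝ x ⁻¹' Ω, K y ∂μ = ∫ y in Ω, K y ∂μ := by
    simpa only [hKx] using hμ.setIntegral_preimage_emb hemb K Ω
  have hdisj : Disjoint (symmetricExterior Ω x) (pointReflection ℝ x ⁻¹' Ω) :=
    disjoint_compl_left.mono_left inter_subset_right
  calc ∫ y, (Ωᶜ.indicator (fun _ ↦ (1 : ℝ)) y - Ω.indicator (fun _ ↦ (1 : ℝ)) y) * K y ∂μ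
      = ∫ y, (Ωᶜ.indicator K y - Ω.indicator K y) ∂μ := by
        simp only [sub_mul, ← indicator_mul_left, one_mul]
    _ = ∫ y in Ωᶜ, K y ∂μ - ∫ y in Ω, K y ∂μ := by
        rw [integral_sub (hK.indicator hΩ.compl) (hK.indicator hΩ), integral_indicator hΩ.compl,
          integral_indicator hΩ]
    _ = ∫ y in symmetricExterior Ω x, K y ∂μ := by
        rw [← symmetricExterior_union_preimage hconv hx, setIntegral_union hdisj
          (hemb.measurable hΩ) hK.integrableOn hK.integrableOn, hmirror, add_sub_cancel_right]

variable [FiniteDimensional ℝ E] (μ : Measure E) [μ.IsAddHaarMeasure]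

theorem measurePreserving_pointReflection (x : E) :
    MeasurePreserving (pointReflection ℝ x) μ μ := by
  convert Measure.measurePreserving_sub_left μ (x + x) using 1
  ext y
  rw [AffineIsometryEquiv.pointReflection_apply, vsub_eq_sub, vadd_eq_add, sub_add_eq_add_sub]

theorem measureReal_ball_le_symmetricExterior_add (hΩ : MeasurableSet Ω) (x : E) (r : ℝ) :
    μ.real (ball x r) ≤
      μ.real (symmetricExterior Ω x ∩ ball x r) + 2 * μ.real (Ω ∩ ball x r) := by
  have hmirror : μ.real (pointReflection ℝ x ⁻¹' (Ω ∩ ball x r)) = μ.real (Ω ∩ ball x r) :=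
    (measurePreserving_pointReflection μ x).measureReal_preimage
      (hΩ.inter measurableSet_ball).nullMeasurableSet
  have hball : pointReflection ℝ x ⁻¹' ball x r = ball x r := by
    ext y
    simp only [mem_preimage, mem_ball, AffineIsometryEquiv.dist_pointReflection_fixed]
  have hcover : ball x r = symmetricExterior Ω x ∩ ball x r ∪
      (Ω ∩ ball x r ∪ pointReflection ℝ x ⁻¹' (Ω ∩ ball x r)) := by
    ext y
    simp only [preimage_inter, hball, symmetricExterior, preimage_compl, mem_union, mem_inter_iff,
      mem_compl_iff]
    tauto
  calc μ.real (ball x r)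
      = μ.real (symmetricExterior Ω x ∩ ball x r ∪
          (Ω ∩ ball x r ∪ pointReflection ℝ x ⁻¹' (Ω ∩ ball x r))) := congrArg _ hcover
    _ ≤ μ.real (symmetricExterior Ω x ∩ ball x r) +
          (μ.real (Ω ∩ ball x r) + μ.real (pointReflection ℝ x ⁻¹' (Ω ∩ ball x r))) :=
        (measureReal_union_le _ _).trans (by gcongr; exact measureReal_union_le _ _)
    _ = _ := by rw [hmirror, two_mul]

theorem integrableOn_dist_rpow_neg (x : E) {ε k : ℝ} (hε : 0 < ε)
    (hk : (Module.finrank ℝ E : ℝ) < k) :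
    IntegrableOn (fun y ↦ dist y x ^ (-k)) {y | ε < dist y x} μ := by
  have hk0 : 0 ≤ k := (Nat.cast_nonneg _).trans hk.le
  have hbound : Integrable (fun y ↦ (ε / (1 + ε)) ^ (-k) * (1 + ‖y - x‖) ^ (-k)) μ :=
    ((integrable_one_add_norm hk).comp_sub_right x).const_mul _
  refine hbound.integrableOn.mono' (Measurable.aestronglyMeasurable (by fun_prop)) ?_
  refine ae_restrict_of_forall_mem (measurableSet_lt measurable_const (by fun_prop))
    fun y (hy : ε < dist y x) ↦ ?_
  have hdist : 0 < dist y x := hε.trans hy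
  rw [Real.norm_of_nonneg (by positivity), ← Real.mul_rpow (by positivity) (by positivity),
    ← dist_eq_norm]
  refine Real.rpow_le_rpow_of_nonpos (by positivity) ?_ (neg_nonpos.2 hk0)
  rw [div_mul_eq_mul_div, div_le_iff₀ (by positivity)]
  nlinarith

theorem mul_measureReal_symmetricExterior_sub_le_setIntegral (hΩ : MeasurableSet Ω)
    (hconv : Convex ℝ Ω) (hx : x ∉ Ω) {k ε : ℝ} (hk : (Module.finrank ℝ E : ℝ) < k)
    (hε : 0 < ε) {r : ℝ} (hr : 0 ≤ r) :
    r ^ (-k) * (μ.real (symmetricExterior Ω x ∩ ball x r) - μ.real (closedBall x ε)) ≤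
      ∫ y in {y | ε < dist y x},
        (Ωᶜ.indicator (fun _ ↦ (1 : ℝ)) y - Ω.indicator (fun _ ↦ (1 : ℝ)) y)
          * dist y x ^ (-k) ∂μ := by
  have hk0 : 0 ≤ k := (Nat.cast_nonneg _).trans hk.le
  set D : Set E := {y | ε < dist y x}
  set S : Set E := symmetricExterior Ω x ∩ ball x r
  have hD : MeasurableSet D := measurableSet_lt measurable_const (by fun_prop)
  have hS : MeasurableSet S := (measurableSet_symmetricExterior hΩ x).inter measurableSet_ball
  have hD_mirror : pointReflection ℝ x ⁻¹' D = D := by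
    ext y
    simp only [D, mem_preimage, mem_ofPred_eq, AffineIsometryEquiv.dist_pointReflection_fixed]
  have hμ : MeasurePreserving (pointReflection ℝ x) (μ.restrict D) (μ.restrict D) := by
    simpa only [hD_mirror] using
      (measurePreserving_pointReflection μ x).restrict_preimage hD
  have hint : IntegrableOn (fun y ↦ dist y x ^ (-k)) D μ := integrableOn_dist_rpow_neg μ x hε hk
  have hSD : S \ closedBall x ε = S ∩ D := by
    ext y
    simp [D]
  rw [integral_compl_indicator_sub_indicator_mul hΩ hconv hx hμ hint
    fun y ↦ by rw [AffineIsometryEquiv.dist_pointReflection_fixed]]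
  calc r ^ (-k) * (μ.real S - μ.real (closedBall x ε))
      ≤ r ^ (-k) * μ.real (S \ closedBall x ε) := by
        gcongr
        exact le_measureReal_sdiff measure_closedBall_lt_top.ne
    _ ≤ ∫ y in S \ closedBall x ε, dist y x ^ (-k) ∂μ := by
        refine setIntegral_ge_of_const_le_real (hS.diff measurableSet_closedBall)
          (measure_ne_top_of_subset (sdiff_subset.trans inter_subset_right)
            measure_ball_lt_top.ne) (fun y hy ↦ ?_) (hint.mono_set (hSD ▸ inter_subset_right))
        have hyD : y ∈ D := (hSD.subset hy).2
        exact Real.rpow_le_rpow_of_nonpos (hε.trans hyD) (mem_ball.1 hy.1.2).le (neg_nonpos.2 hk0)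
    _ = ∫ y in S, dist y x ^ (-k) ∂μ.restrict D := by rw [Measure.restrict_restrict hS, hSD]
    _ ≤ ∫ y in symmetricExterior Ω x, dist y x ^ (-k) ∂μ.restrict D := by
        refine setIntegral_mono_set hint.integrableOn ?_ inter_subset_left.eventuallyLE
        exact ae_of_all _ fun y ↦ by positivity

end SymmetricExterior

section MichaelSimon

open scoped Topology

variable {n : ℕ} {α : ℝ} {Ω : Set (EuclideanSpace ℝ (Fin (n + 1)))}
  {x : EuclideanSpace ℝ (Fin (n + 1))}

/-- The Lebesgue measure of the unit ball of `ℝ ^ (n + 1)`. -/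
noncomputable def unitBallVolume (n : ℕ) : ℝ :=
  volume.real (ball (0 : EuclideanSpace ℝ (Fin (n + 1))) 1)

theorem unitBallVolume_pos (n : ℕ) : 0 < unitBallVolume n :=
  ENNReal.toReal_pos (measure_ball_pos volume _ one_pos).ne' measure_ball_lt_top.ne

theorem volume_real_ball (x : EuclideanSpace ℝ (Fin (n + 1))) {r : ℝ} (hr : 0 ≤ r) :
    volume.real (ball x r) = unitBallVolume n * r ^ (n + 1) := by
  rw [← Measure.addHaar_real_closedBall_eq_addHaar_real_ball,
    Measure.addHaar_real_closedBall _ _ hr, finrank_euclideanSpace_fin, unitBallVolume, mul_comm]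

theorem IsFracMeanCurv.mul_volume_le (hα : 0 < α) (hΩ : MeasurableSet Ω)
    (hconv : Convex ℝ Ω) (hx : x ∉ Ω) {h : ℝ} (hh : IsFracMeanCurv n α Ω x h) {r : ℝ}
    (hr : 0 ≤ r) :
    α / 2 * (r ^ (-((n : ℝ) + 1 + α)) * volume.real (symmetricExterior Ω x ∩ ball x r)) ≤ h := by
  have hball : Tendsto (fun ε : ℝ ↦ volume.real (closedBall x ε)) (𝓝[>] 0) (𝓝 0) := by
    have hpow : Tendsto (fun ε : ℝ ↦ unitBallVolume n * ε ^ (n + 1)) (𝓝[>] 0) (𝓝 0) :=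
      (Continuous.tendsto' (by fun_prop) 0 0 (by simp)).mono_left nhdsWithin_le_nhds
    refine hpow.congr' (eventually_mem_nhdsWithin.mono fun ε (hε : 0 < ε) ↦ ?_)
    simp only [Measure.addHaar_real_closedBall_eq_addHaar_real_ball, volume_real_ball x hε.le]
  have hlower : Tendsto (fun ε : ℝ ↦ α / 2 * (r ^ (-((n : ℝ) + 1 + α)) *
      (volume.real (symmetricExterior Ω x ∩ ball x r) - volume.real (closedBall x ε)))) (𝓝[>] 0)
      (𝓝 (α / 2 * (r ^ (-((n : ℝ) + 1 + α)) *
        volume.real (symmetricExterior Ω x ∩ ball x r)))) := by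
    simpa only [sub_zero] using ((hball.const_sub _).const_mul _).const_mul (α / 2)
  refine le_of_tendsto_of_tendsto hlower hh
    (eventually_mem_nhdsWithin.mono fun ε (hε : 0 < ε) ↦ ?_)
  have hk : (Module.finrank ℝ (EuclideanSpace ℝ (Fin (n + 1))) : ℝ) < (n : ℝ) + 1 + α := by
    simpa using hα
  exact mul_le_mul_of_nonneg_left
    (mul_measureReal_symmetricExterior_sub_le_setIntegral volume hΩ hconv hx hk hε hr)
    (by positivity)

theorem IsFracMeanCurv.hausdorffMeasure_or_le (hα : 0 < α) (hΩ : IsOpen Ω)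
    (hconv : Convex ℝ Ω) (hx : x ∉ Ω) {h : ℝ} (hh : IsFracMeanCurv n α Ω x h) {r : ℝ}
    (hr : 0 < r) :
    ENNReal.ofReal (unitBallVolume n / 8 * r ^ (n : ℝ)) ≤ μH[(n : ℝ)] (frontier Ω ∩ ball x r) ∨
      α * unitBallVolume n / 4 * r ^ (-α) ≤ h := by
  rcases le_total (unitBallVolume n / 4 * r ^ (n + 1)) (volume.real (Ω ∩ ball x r)) with hvol | hvol
  · left
    refine (ENNReal.mul_le_mul_iff_right (a := ENNReal.ofReal (2 * r)) (by simpa using hr)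
      ENNReal.ofReal_ne_top).1 ?_
    calc ENNReal.ofReal (2 * r) * ENNReal.ofReal (unitBallVolume n / 8 * r ^ (n : ℝ))
        = ENNReal.ofReal (unitBallVolume n / 4 * r ^ (n + 1)) := by
          rw [← ENNReal.ofReal_mul (by positivity), Real.rpow_natCast]
          ring_nf
      _ ≤ volume (Ω ∩ ball x r) := ENNReal.ofReal_le_of_le_toReal hvol
      _ ≤ ENNReal.ofReal (2 * r) * μH[(n : ℝ)] (frontier Ω ∩ ball x r) :=
          volume_inter_ball_le_hausdorffMeasure_frontier finrank_euclideanSpace_fin hΩ hconv hx r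
  · right
    have hpow : r ^ (-α) = r ^ (-((n : ℝ) + 1 + α)) * r ^ (n + 1) := by
      rw [← Real.rpow_natCast, ← Real.rpow_add hr]
      congr 1
      push_cast
      ring
    have hsymm : unitBallVolume n / 2 * r ^ (n + 1) ≤
        volume.real (symmetricExterior Ω x ∩ ball x r) := by
      have hball := measureReal_ball_le_symmetricExterior_add volume hΩ.measurableSet x r
      rw [volume_real_ball x hr.le] at hball
      linarith
    calc α * unitBallVolume n / 4 * r ^ (-α)
        = α / 2 * (r ^ (-((n : ℝ) + 1 + α)) * (unitBallVolume n / 2 * r ^ (n + 1))) := by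
          rw [hpow]
          ring
      _ ≤ α / 2 * (r ^ (-((n : ℝ) + 1 + α)) *
            volume.real (symmetricExterior Ω x ∩ ball x r)) := by gcongr
      _ ≤ h := hh.mul_volume_le hα hΩ.measurableSet hconv hx hr.le

theorem IsFracMeanCurv.massOrWeight (hα : 0 < α) (hΩ : IsOpen Ω) (hconv : Convex ℝ Ω)
    (hx : x ∉ Ω) {h : ℝ} (hh : IsFracMeanCurv n α Ω x h) {t : ℝ} (ht : 0 ≤ t) :
    MassOrWeight (μH[(n : ℝ)].restrict (frontier Ω)) n t (unitBallVolume n / 8)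
      ((α * unitBallVolume n / 4) ^ (t / α)) x (ENNReal.ofReal (h ^ (t / α))) := by
  intro r hr
  rw [Measure.restrict_apply measurableSet_ball, inter_comm]
  refine (hh.hausdorffMeasure_or_le hα hΩ hconv hx hr).imp_right fun hle ↦ ?_
  have hV := unitBallVolume_pos n
  have hexp : -α * (t / α) = -t := by field_simp
  rw [← hexp, Real.rpow_mul hr.le, ← Real.mul_rpow (by positivity) (by positivity)]
  gcongr

/-- The constant of the Sobolev inequality on the boundary of an open convex subset of
`ℝ ^ (n + 1)`, with the full Gagliardo energy and before taking `p`-th roots. -/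
noncomputable def convexBoundarySobolevConst (n : ℕ) (α s p : ℝ) : ℝ :=
  sobolevConst n (s * p) p (n * p / (n - s * p)) (unitBallVolume n / 8)
    ((α * unitBallVolume n / 4) ^ (s * p / α))

theorem convexBoundarySobolevConst_pos {s p : ℝ} (hα : 0 < α) :
    0 < convexBoundarySobolevConst n α s p := by
  have hV := unitBallVolume_pos n
  exact sobolevConst_pos (by positivity) (by positivity)

/-- The constant of the fractional Michael-Simon inequality: the Gagliardo energy enters that
inequality with a factor `1 / 2`, and both sides with the power `1 / p`. -/
noncomputable def michaelSimonConst (n : ℕ) (α s p : ℝ) : ℝ :=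
  (convexBoundarySobolevConst n α s p * 2) ^ (1 / p)

theorem michaelSimonConst_pos {s p : ℝ} (hα : 0 < α) : 0 < michaelSimonConst n α s p :=
  Real.rpow_pos_of_pos (mul_pos (convexBoundarySobolevConst_pos hα) two_pos) _

variable {F : Type*} [SeminormedAddCommGroup F] {s p : ℝ}
  {Hα : EuclideanSpace ℝ (Fin (n + 1)) → ℝ} {u : EuclideanSpace ℝ (Fin (n + 1)) → F}

theorem lintegral_frontier_rpow_le (hα : 0 < α) (hs : 0 < s) (hp : 0 < p) (hnsp : s * p < n)
    (hΩ : IsOpen Ω) (hconv : Convex ℝ Ω)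
    (hHα : AEMeasurable Hα (μH[(n : ℝ)].restrict (frontier Ω)))
    (hcurv : ∀ᵐ x ∂μH[(n : ℝ)].restrict (frontier Ω), IsFracMeanCurv n α Ω x (Hα x))
    (hu : AEStronglyMeasurable u (μH[(n : ℝ)].restrict (frontier Ω)))
    (hup : ∫⁻ x in frontier Ω, ENNReal.ofReal (‖u x‖ ^ p) ∂μH[(n : ℝ)] ≠ ⊤) :
    (∫⁻ x in frontier Ω, ENNReal.ofReal (‖u x‖ ^ ((n : ℝ) * p / (n - s * p))) ∂μH[(n : ℝ)])
        ^ (1 - s * p / n) ≤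
      ENNReal.ofReal (convexBoundarySobolevConst n α s p) *
        (∫⁻ x in frontier Ω,
            gagliardoDensity (μH[(n : ℝ)].restrict (frontier Ω)) p (n + s * p) u x ∂μH[(n : ℝ)]
          + ∫⁻ x in frontier Ω,
              ENNReal.ofReal (Hα x ^ (s * p / α) * ‖u x‖ ^ p) ∂μH[(n : ℝ)]) := by
  have hV := unitBallVolume_pos n
  have ht : 0 < s * p := mul_pos hs hp
  have hn : (0 : ℝ) < n := ht.trans hnsp
  have hnsp' : (0 : ℝ) < n - s * p := sub_pos.2 hnsp
  have hpq : n * p / (n - s * p) * (1 - s * p / n) = p := by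
    rw [one_sub_div hn.ne', div_mul_div_cancel₀ hnsp'.ne', mul_div_cancel_left₀ _ hn.ne']
  have hmass : ∀ᵐ x ∂μH[(n : ℝ)].restrict (frontier Ω),
      MassOrWeight (μH[(n : ℝ)].restrict (frontier Ω)) n (s * p) (unitBallVolume n / 8)
        ((α * unitBallVolume n / 4) ^ (s * p / α)) x (ENNReal.ofReal (Hα x ^ (s * p / α))) := by
    filter_upwards [hcurv, ae_restrict_mem isClosed_frontier.measurableSet] with x hx hxΩ
    exact hx.massOrWeight hα hΩ hconv (hΩ.frontier_eq.subset hxΩ).2 ht.le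
  simp_rw [ENNReal.ofReal_mul' (Real.rpow_nonneg (norm_nonneg _) p)]
  exact lintegral_rpow_le_of_massOrWeight ht hnsp (by positivity) hpq (by positivity)
    (by positivity) (hHα.pow_const (s * p / α)).ennreal_ofReal hmass hu hup

theorem fractional_michael_simon_convex_general (hα : 0 < α) (hs : 0 < s) (hp : 0 < p)
    (hnsp : s * p < n) (hΩ : IsOpen Ω) (hconv : Convex ℝ Ω)
    (hHα : AEMeasurable Hα (μH[(n : ℝ)].restrict (frontier Ω)))
    (hcurv : ∀ᵐ x ∂μH[(n : ℝ)].restrict (frontier Ω), IsFracMeanCurv n α Ω x (Hα x))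
    (hu : AEStronglyMeasurable u (μH[(n : ℝ)].restrict (frontier Ω)))
    (hup : ∫⁻ x in frontier Ω, ENNReal.ofReal (‖u x‖ ^ p) ∂μH[(n : ℝ)] ≠ ⊤) :
    (∫⁻ x in frontier Ω, ENNReal.ofReal (‖u x‖ ^ ((n : ℝ) * p / (n - s * p))) ∂μH[(n : ℝ)])
        ^ (((n : ℝ) - s * p) / (n * p)) ≤
      ENNReal.ofReal (michaelSimonConst n α s p) *
        ((1 / 2) * ∫⁻ x in frontier Ω,
            gagliardoDensity (μH[(n : ℝ)].restrict (frontier Ω)) p (n + s * p) u x ∂μH[(n : ℝ)]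
          + ∫⁻ x in frontier Ω,
              ENNReal.ofReal (Hα x ^ (s * p / α) * ‖u x‖ ^ p) ∂μH[(n : ℝ)]) ^ (1 / p) := by
  have hn : (0 : ℝ) < n := (mul_pos hs hp).trans hnsp
  have hK := convexBoundarySobolevConst_pos (n := n) (s := s) (p := p) hα
  have hexp : ((n : ℝ) - s * p) / (n * p) = (1 - s * p / n) * (1 / p) := by field_simp
  have htwo (G W : ℝ≥0∞) : G + W ≤ 2 * (1 / 2 * G + W) := by
    rw [mul_add, ← mul_assoc, one_div, ENNReal.mul_inv_cancel two_ne_zero ENNReal.ofNat_ne_top,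
      one_mul]
    gcongr
    exact le_mul_of_one_le_left' one_le_two
  rw [hexp, ENNReal.rpow_mul, michaelSimonConst,
    ← ENNReal.ofReal_rpow_of_pos (mul_pos hK two_pos),
    ← ENNReal.mul_rpow_of_nonneg _ _ (by positivity), ENNReal.ofReal_mul hK.le,
    ENNReal.ofReal_ofNat, mul_assoc]
  gcongr
  refine (lintegral_frontier_rpow_le hα hs hp hnsp hΩ hconv hHα hcurv hu hup).trans ?_
  gcongr
  exact htwo _ _

end MichaelSimon

/-- Fractional Michael-Simon and Allard inequality on convex hypersurfaces:
the Sobolev inequality for `W^{s,p}(∂Ω)`, with the extra `L^p` term weighted by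
`H_α^{sp/α}`. -/
theorem fractional_michael_simon_convex
    (n : ℕ) (hn : 1 ≤ n) (α s p : ℝ)
    (hα : α ∈ Set.Ioo (0:ℝ) 1) (hs : s ∈ Set.Ioo (0:ℝ) 1) (hp : 1 ≤ p)
    (hnsp : (n:ℝ) > s * p) :
    ∃ C : ℝ, 0 < C ∧
      ∀ (Ω : Set (EuclideanSpace ℝ (Fin (n+1)))), IsOpen Ω → Convex ℝ Ω →
      ∀ (Hα : EuclideanSpace ℝ (Fin (n+1)) → ℝ), Measurable Hα →
        (∀ x ∈ frontier Ω, 0 ≤ Hα x) →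
        (∀ᵐ x ∂(μH[(n:ℝ)].restrict (frontier Ω)), IsFracMeanCurv n α Ω x (Hα x)) →
      ∀ (u : EuclideanSpace ℝ (Fin (n+1)) → ℝ), Measurable u →
        (∫⁻ x in frontier Ω, ENNReal.ofReal (|u x| ^ p) ∂μH[(n:ℝ)]) < ⊤ →
        (∫⁻ x in frontier Ω,
            ENNReal.ofReal (|u x| ^ ((n:ℝ) * p / ((n:ℝ) - s * p))) ∂μH[(n:ℝ)])
              ^ (((n:ℝ) - s * p) / ((n:ℝ) * p))
          ≤ ENNReal.ofReal C *
            ((1/2) * ∫⁻ x in frontier Ω, ∫⁻ y in frontier Ω,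
                ENNReal.ofReal (|u x - u y| ^ p / dist x y ^ ((n:ℝ) + s * p))
                  ∂μH[(n:ℝ)] ∂μH[(n:ℝ)]
              + ∫⁻ x in frontier Ω,
                  ENNReal.ofReal (Hα x ^ (s * p / α) * |u x| ^ p) ∂μH[(n:ℝ)]) ^ (1/p) := by
  refine ⟨michaelSimonConst n α s p, michaelSimonConst_pos hα.1,
    fun Ω hΩ hconv Hα hHα _ hcurv u hu hup ↦ ?_⟩
  simpa only [gagliardoDensity, Real.norm_eq_abs] using
    fractional_michael_simon_convex_general hα.1 hs.1 (one_pos.trans_le hp) hnsp hΩ hconv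
      hHα.aemeasurable hcurv hu.aestronglyMeasurable hup.ne
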